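/- There exists a countable connected graph that is locally constructible but is not a weak cop win. -/

import Mathlib

universe u

/-- `y` dominates `x` in `G`: `y ≠ x` and the closed neighbourhood of `x` is contained
in the closed neighbourhood of `y`. -/
def Dominates {V : Type u} (G : SimpleGraph V) (y x : V) : Prop :=
  y ≠ x ∧ ∀ z : V, (z = x ∨ G.Adj x z) → (z = y ∨ G.Adj y z)

/-- `y` dominates `x` in the subgraph of `G` induced by `S`. -/
def DominatesOn {V : Type u} (G : SimpleGraph V) (S : Set V) (y x : V) : Prop :=
  y ≠ x ∧ ∀ z ∈ S, (z = x ∨ G.Adj x z) → (z = y ∨ G.Adj y z)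

/-- `r` (a well-order on `V`) is a construction order for `G`: every non-root vertex `x`
(i.e. one with a strictly earlier vertex) is dominated, in the subgraph induced by the
vertices up to and including `x`, by some strictly earlier vertex. -/
def ConstructionOrderSpec {V : Type u} (G : SimpleGraph V) (r : V → V → Prop) : Prop :=
  ∀ x : V, (∃ y, r y x) → ∃ y, r y x ∧ DominatesOn G {z | r z x ∨ z = x} y x

/-- A graph is constructible if it has a construction order. -/
def Constructible {V : Type u} (G : SimpleGraph V) : Prop :=
  ∃ r : V → V → Prop, IsWellOrder V r ∧ ConstructionOrderSpec G r

/-- Given a cop strategy `σ` (a function of the robber's history of positions) and a robber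
position sequence `r`, the cop's position at time `n`: the cop has seen the robber's first
`n` positions when making his `n`-th move. `copPos σ r 0 = σ []` is the cop's start. -/
def copPos {V : Type u} (σ : List V → V) (r : ℕ → V) (n : ℕ) : V :=
  σ (List.ofFn fun i : Fin n => r i.val)

/-- A cop strategy is legal if each successive position is equal or adjacent to the previous one. -/
def LegalCop {V : Type u} (G : SimpleGraph V) (σ : List V → V) : Prop :=
  ∀ l : List V, l ≠ [] → σ l = σ l.dropLast ∨ G.Adj (σ l.dropLast) (σ l)

/-- A legal robber position sequence: each move is to an adjacent vertex or staying put. -/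
def LegalRun {V : Type u} (G : SimpleGraph V) (r : ℕ → V) : Prop :=
  ∀ n : ℕ, r (n + 1) = r n ∨ G.Adj (r n) (r (n + 1))

/-- The cop catches the robber: at some time their positions coincide (either just after the
robber's move, or just after the cop's move). -/
def Caught {V : Type u} (σ : List V → V) (r : ℕ → V) : Prop :=
  ∃ n : ℕ, copPos σ r n = r n ∨ copPos σ r (n + 1) = r n

/-- `G` is cop-win: the cop has a legal strategy catching every legal robber play. -/
def CopWin {V : Type u} (G : SimpleGraph V) : Prop :=
  ∃ σ : List V → V, LegalCop G σ ∧ ∀ r : ℕ → V, LegalRun G r → Caught σ r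

/-- `G` is a weak cop win: the cop has a legal strategy guaranteeing that in every legal robber
play, either the robber is caught or the robber occupies each vertex at only finitely many times. -/
def WeakCopWin {V : Type u} (G : SimpleGraph V) : Prop :=
  ∃ σ : List V → V, LegalCop G σ ∧
    ∀ r : ℕ → V, LegalRun G r → Caught σ r ∨ ∀ v : V, {n : ℕ | r n = v}.Finite

/-- `G` is locally constructible: every finite set of vertices is contained in a finite set
inducing a constructible subgraph. -/
def LocallyConstructible {V : Type u} (G : SimpleGraph V) : Prop :=
  ∀ A : Set V, A.Finite → ∃ U : Set V, A ⊆ U ∧ U.Finite ∧ Constructible (G.induce U)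

/-!
Let `H` be a graph with a height function. Add to `H`, for every vertex `b` and every level `ℓ`, a
shadow of `b` that sees only what lies over `b` and its neighbours of height at most `ℓ`, and add an
apex joined to all shadows. Among finitely many vertices the heights are bounded, so the shadow of
`b` at a sufficiently high level dominates everything else over `b`, while the shadows at that level
are, among themselves, dominated by the apex: the graph is locally constructible, whatever `H` is.

Now let `H` be a ray `0, 1, 2, …` together with three hubs, hub `j` being joined to all `t` with
`t ≡ j (mod 3)`. The robber waits at a hub. When the cop threatens it, the cop sees only a bounded
part of the ray, and the robber flees to a vertex of the ray beyond that bound. From there the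
robber returns to the adjacent hub as soon as that is safe, and otherwise steps down the ray. While
the robber is at `t` on the ray, a cop over the class of `t` modulo `3` is always below `t`. Only
such a cop threatens the hub of `t`, and its neighbours in the class of `t - 1` are below `t - 1`,
so the invariant survives the step down. The descent is finite, so some hub is visited infinitely
often.
-/

/-- Reflexive adjacency: `y` lies in the closed neighbourhood of `x`. This is the relation between
successive positions of either player. -/
def AdjOrEq {V : Type*} (G : SimpleGraph V) (x y : V) : Prop :=
  y = x ∨ G.Adj x y

lemma AdjOrEq.refl {V : Type*} (G : SimpleGraph V) (x : V) : AdjOrEq G x x :=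
  Or.inl rfl

lemma AdjOrEq.symm {V : Type*} {G : SimpleGraph V} {x y : V} (h : AdjOrEq G x y) :
    AdjOrEq G y x :=
  h.imp Eq.symm SimpleGraph.Adj.symm

lemma adjOrEq_fromRel {V : Type*} {r : V → V → Prop} (hrefl : ∀ x, r x x)
    (hsymm : ∀ ⦃x y⦄, r x y → r y x) {x y : V} :
    AdjOrEq (SimpleGraph.fromRel r) x y ↔ r x y := by
  rw [AdjOrEq, SimpleGraph.fromRel_adj]
  constructor
  · rintro (rfl | ⟨-, hxy | hyx⟩)
    exacts [hrefl _, hxy, hsymm hyx]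
  · exact fun hxy => (eq_or_ne y x).imp_right fun hne => ⟨hne.symm, Or.inl hxy⟩

section Evasion

variable {V : Type*}

/-- The play of a robber who always moves to the vertex that `f` assigns to the list of the robber's
previous positions. -/
def robberPlay (f : List V → V) (n : ℕ) : V :=
  f (List.ofFn fun i : Fin n => robberPlay f i)
termination_by n
decreasing_by exact i.isLt

lemma exists_run_of_reply (σ : List V → V) (r₀ : V) (reply : V → V → V) :
    ∃ r : ℕ → V, r 0 = r₀ ∧ ∀ n, r (n + 1) = reply (copPos σ r (n + 1)) (r n) := by
  let f (l : List V) : V := l.getLast?.elim r₀ (reply (σ l))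
  refine ⟨robberPlay f, ?_, fun n => ?_⟩
  · rw [robberPlay]
    rfl
  · rw [robberPlay, copPos]
    simp only [f, List.ofFn_succ', List.concat_eq_append, List.getLast?_concat, Option.elim_some,
      Fin.val_last]

lemma adjOrEq_copPos {G : SimpleGraph V} {σ : List V → V} (hσ : LegalCop G σ) (r : ℕ → V) (n : ℕ) :
    AdjOrEq G (copPos σ r n) (copPos σ r (n + 1)) := by
  have hmove := hσ (List.ofFn fun i : Fin (n + 1) => r i) (by simp)
  have dropLast_history : (List.ofFn fun i : Fin (n + 1) => r i).dropLast =
      List.ofFn fun i : Fin n => r i := by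
    rw [List.ofFn_succ', List.concat_eq_append, List.dropLast_concat]
    rfl
  rwa [dropLast_history] at hmove

/-- Positions with the cop to move, all of whose successors are `Safe` for the robber. -/
def StaysSafe (G : SimpleGraph V) (Safe : V → V → Prop) (c r : V) : Prop :=
  ∀ c', AdjOrEq G c c' → Safe c' r

variable {G : SimpleGraph V} {Safe : V → V → Prop}

lemma exists_legalRun_staysSafe {Good : V → V → Prop}
    (start : ∀ c, ∃ r, StaysSafe G Safe c r)
    (step : ∀ c r, Safe c r → ∃ r', AdjOrEq G r r' ∧ StaysSafe G Safe c r' ∧ Good r r')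
    {σ : List V → V} (hσ : LegalCop G σ) :
    ∃ r : ℕ → V, LegalRun G r ∧ (∀ n, StaysSafe G Safe (copPos σ r n) (r n)) ∧
      ∀ n, Good (r n) (r (n + 1)) := by
  choose! reply reply_adj reply_safe reply_good using step
  obtain ⟨r₀, hr₀⟩ := start (σ [])
  obtain ⟨r, r_zero, r_succ⟩ := exists_run_of_reply σ r₀ reply
  have safe_of_stays {n : ℕ} (h : StaysSafe G Safe (copPos σ r n) (r n)) :
      Safe (copPos σ r (n + 1)) (r n) := h _ (adjOrEq_copPos hσ r n)
  have stays (n : ℕ) : StaysSafe G Safe (copPos σ r n) (r n) := by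
    induction n with
    | zero => rwa [r_zero]
    | succ n ih => exact r_succ n ▸ reply_safe _ _ (safe_of_stays ih)
  exact ⟨r, fun n => r_succ n ▸ reply_adj _ _ (safe_of_stays (stays n)), stays,
    fun n => r_succ n ▸ reply_good _ _ (safe_of_stays (stays n))⟩

variable {α : Type*} [Preorder α] [WellFoundedLT α]

lemma exists_infinite_fiber_of_mem_or_lt {F : Set V} (hF : F.Finite) (rank : V → α) {r : ℕ → V}
    (hr : ∀ n, r n ∈ F ∨ rank (r (n + 1)) < rank (r n)) :
    ∃ v, {n | r n = v}.Infinite := by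
  by_contra! hfin
  have visits_finite : {n | r n ∈ F}.Finite :=
    (hF.biUnion fun v _ => hfin v).subset fun n hn => Set.mem_biUnion hn rfl
  obtain ⟨N, hN⟩ := visits_finite.bddAbove
  have descends (k : ℕ) : rank (r (N + 1 + k + 1)) < rank (r (N + 1 + k)) :=
    (hr (N + 1 + k)).resolve_left fun hmem => by
      have : N + 1 + k ≤ N := hN hmem
      omega
  exact not_strictAnti_of_wellFoundedLT (fun k => rank (r (N + 1 + k)))
    (strictAnti_nat_of_succ_lt descends)

theorem not_weakCopWin_of_safe {F : Set V} (hF : F.Finite) (rank : V → α)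
    (ne_of_safe : ∀ c r, Safe c r → c ≠ r)
    (start : ∀ c, ∃ r, StaysSafe G Safe c r)
    (step : ∀ c r, Safe c r →
      ∃ r', AdjOrEq G r r' ∧ StaysSafe G Safe c r' ∧ (r ∈ F ∨ rank r' < rank r)) :
    ¬ WeakCopWin G := by
  rintro ⟨σ, hσ, hwin⟩
  obtain ⟨r, legal, stays, descends⟩ := exists_legalRun_staysSafe start step hσ
  rcases hwin r legal with ⟨n, caught | caught⟩ | hfin
  · exact ne_of_safe _ _ (stays n _ (AdjOrEq.refl G _)) caught
  · exact ne_of_safe _ _ (stays n _ (adjOrEq_copPos hσ r n)) caught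
  · obtain ⟨v, hv⟩ := exists_infinite_fiber_of_mem_or_lt hF rank descends
    exact hv (hfin v)

end Evasion

section Construction

variable {V : Type*} {G : SimpleGraph V}

theorem constructible_of_rank {α : Type*} [LinearOrder α] [WellFoundedLT α] (rank : V → α)
    (h : ∀ x, (∃ y ≠ x, rank y ≤ rank x) →
      ∃ y, rank y < rank x ∧ DominatesOn G {z | rank z ≤ rank x} y x) :
    Constructible G := by
  let rankThenTie : V ↪ α × V := ⟨fun x => (rank x, x), fun _ _ hxy => congrArg Prod.snd hxy⟩
  let r : V → V → Prop := rankThenTie ⁻¹'o Prod.Lex (· < ·) WellOrderingRel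
  have rank_le {x y : V} (hxy : r x y) : rank x ≤ rank y :=
    (Prod.lex_iff.mp hxy).elim le_of_lt fun hxy => hxy.1.le
  have wellOrder : IsWellOrder V r := (RelEmbedding.preimage rankThenTie _).isWellOrder
  refine ⟨r, wellOrder, fun x ⟨w, hw⟩ => ?_⟩
  have w_ne_x : w ≠ x := fun hwx => irrefl_of r x (hwx ▸ hw)
  obtain ⟨y, hyx, hne, hdom⟩ := h x ⟨w, w_ne_x, rank_le hw⟩
  refine ⟨y, Prod.Lex.left _ _ hyx, hne, fun z hz => hdom z ?_⟩
  exact hz.elim rank_le fun hzx => hzx ▸ le_rfl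

lemma DominatesOn.mono {S T : Set V} {x y : V} (h : DominatesOn G T y x) (hST : S ⊆ T) :
    DominatesOn G S y x :=
  ⟨h.1, fun z hz => h.2 z (hST hz)⟩

lemma dominatesOn_induce {U : Set V} {S : Set U} {x y : U} :
    DominatesOn (G.induce U) S y x ↔ DominatesOn G (Subtype.val '' S) y x := by
  simp only [DominatesOn, Set.forall_mem_image, ne_eq, Subtype.ext_iff, SimpleGraph.comap_adj,
    Function.Embedding.subtype_apply]

end Construction

section Shadow

/-- Vertices of a shadow graph: `none` is the apex, `some (b, ⊤)` is the vertex `b` of the original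
graph, and `some (b, ℓ)` with `ℓ ≠ ⊤` is the shadow of `b` at level `ℓ`. -/
abbrev ShadowVertex (B α : Type*) : Type _ :=
  Option (B × WithTop α)

variable {B α : Type*} [SemilatticeSup α] (H : SimpleGraph B) (height : B → α)

/-- Reflexive adjacency of the shadow graph of `H`: a shadow of `b` at level `ℓ` sees heights up to
`ℓ ⊔ height b`, the join with `height b` being there to make every shadow see its own original. -/
def ShadowRel : ShadowVertex B α → ShadowVertex B α → Prop
  | none, none => True
  | none, some (_, ℓ) => ℓ ≠ ⊤
  | some (_, ℓ), none => ℓ ≠ ⊤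
  | some (b, ℓ), some (b', ℓ') =>
      AdjOrEq H b b' ∧ (height b : WithTop α) ≤ ℓ' ⊔ height b' ∧
        (height b' : WithTop α) ≤ ℓ ⊔ height b

/-- The graph `H` together with shadows of its vertices at all levels and an apex joined to every
shadow. It is locally constructible for every `H`. -/
def shadowGraph : SimpleGraph (ShadowVertex B α) :=
  SimpleGraph.fromRel (ShadowRel H height)

lemma shadowRel_refl (x : ShadowVertex B α) : ShadowRel H height x x :=
  match x with
  | none => trivial
  | some (b, _) => ⟨AdjOrEq.refl H b, le_sup_right, le_sup_right⟩

variable {H height}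

lemma ShadowRel.symm : ∀ ⦃x y⦄, ShadowRel H height x y → ShadowRel H height y x
  | none, none, h => h
  | none, some _, h => h
  | some _, none, h => h
  | some _, some _, ⟨hadj, hle, hle'⟩ => ⟨hadj.symm, hle', hle⟩

lemma adjOrEq_shadowGraph {x y : ShadowVertex B α} :
    AdjOrEq (shadowGraph H height) x y ↔ ShadowRel H height x y :=
  adjOrEq_fromRel (shadowRel_refl H height) ShadowRel.symm

lemma AdjOrEq.shadowGraph_top {b b' : B} (h : AdjOrEq H b b') :
    AdjOrEq (shadowGraph H height) (some (b, ⊤)) (some (b', ⊤)) :=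
  adjOrEq_shadowGraph.mpr ⟨h, by simp, by simp⟩

lemma connected_shadowGraph : (shadowGraph H height).Connected := by
  have reachable {x y} (h : ShadowRel H height x y) : (shadowGraph H height).Reachable x y :=
    (adjOrEq_shadowGraph.mpr h).elim (fun hyx => hyx ▸ .refl _) SimpleGraph.Adj.reachable
  have reachable_apex (x : ShadowVertex B α) : (shadowGraph H height).Reachable x none := by
    rcases x with _ | ⟨b, ℓ⟩
    · exact .refl _
    · have to_shadow : ShadowRel H height (some (b, ℓ)) (some (b, height b)) :=
        ⟨AdjOrEq.refl H b, le_sup_right, le_sup_right⟩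
      exact (reachable to_shadow).trans (reachable (WithTop.coe_ne_top (a := height b)))
  exact ⟨fun x y => (reachable_apex x).trans (reachable_apex y).symm⟩

open Classical in
/-- The stage at which a vertex enters the construction of a finite part of the shadow graph: the
apex comes first, then the shadows at level `N`, then everything else. -/
noncomputable def shadowStage (N : α) : ShadowVertex B α → ℕ
  | none => 0
  | some (_, ℓ) => if ℓ = N then 1 else 2

lemma shadowRel_apex_of_shadowStage_le_one {N : α} :
    ∀ {x : ShadowVertex B α}, shadowStage N x ≤ 1 → ShadowRel H height none x
  | none, _ => trivial
  | some (_, ℓ), hx => by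
    have hℓ : ℓ = N := by
      by_contra hℓ
      simp [shadowStage, hℓ] at hx
    exact hℓ ▸ WithTop.coe_ne_top

lemma ShadowRel.shadow_of_height_le {N : α} {b b' : B} {ℓ ℓ' : WithTop α}
    (h : ShadowRel H height (some (b, ℓ)) (some (b', ℓ'))) (hb' : height b' ≤ N) :
    ShadowRel H height (some (b, ↑N)) (some (b', ℓ')) :=
  ⟨h.1, h.2.1, le_sup_of_le_left (WithTop.coe_le_coe.mpr hb')⟩

lemma ShadowRel.height_le {b b' : B} {n : α} {ℓ' : WithTop α}
    (h : ShadowRel H height (some (b, ↑n)) (some (b', ℓ'))) : height b' ≤ n ⊔ height b :=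
  WithTop.coe_le_coe.mp h.2.2

lemma dominatesOn_apex {N : α} {b : B} :
    DominatesOn (shadowGraph H height) {z | shadowStage N z ≤ 1} none (some (b, ↑N)) :=
  ⟨Option.some_ne_none _ |>.symm, fun _ hz _ =>
    adjOrEq_shadowGraph.mpr (shadowRel_apex_of_shadowStage_le_one hz)⟩

lemma dominatesOn_shadow {N : α} {b : B} {ℓ : WithTop α} (hℓ : ℓ ≠ N) :
    DominatesOn (shadowGraph H height) {z | ∀ b' ℓ', z = some (b', ℓ') → height b' ≤ N}
      (some (b, ↑N)) (some (b, ℓ)) := by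
  refine ⟨by simpa using hℓ.symm, fun z hz hadj => adjOrEq_shadowGraph.mpr ?_⟩
  rcases z with _ | ⟨b', ℓ'⟩
  · exact WithTop.coe_ne_top
  · exact (adjOrEq_shadowGraph.mp hadj).shadow_of_height_le (hz b' ℓ' rfl)

lemma constructible_induce_shadowGraph {X : Set B} {L : Set (WithTop α)} {N : α}
    (hN : ∀ b ∈ X, height b ≤ N) (hNL : (N : WithTop α) ∈ L) :
    Constructible ((shadowGraph H height).induce (insert none (some '' (X ×ˢ L)))) := by
  refine constructible_of_rank (fun x => shadowStage N x.1) ?_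
  rintro ⟨_, rfl | ⟨⟨b, ℓ⟩, ⟨hb, _⟩, rfl⟩⟩ ⟨⟨w, hw⟩, hne, hle⟩
  · rcases hw with rfl | ⟨_, _, rfl⟩
    · exact absurd rfl hne
    · simp only [shadowStage] at hle
      split_ifs at hle <;> omega
  · by_cases hℓ : ℓ = N
    · subst hℓ
      refine ⟨⟨none, Or.inl rfl⟩, by simp [shadowStage],
        dominatesOn_induce.mpr (dominatesOn_apex.mono ?_)⟩
      rintro _ ⟨z, hz, rfl⟩
      simpa [shadowStage] using hz
    · refine ⟨⟨some (b, ↑N), Or.inr ⟨(b, ↑N), ⟨hb, hNL⟩, rfl⟩⟩, by simp [shadowStage, hℓ],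
        dominatesOn_induce.mpr ((dominatesOn_shadow hℓ).mono ?_)⟩
      rintro _ ⟨⟨_, rfl | ⟨_, ⟨hb', _⟩, rfl⟩⟩, _, rfl⟩ _ _ ⟨⟩
      exact hN _ hb'

theorem locallyConstructible_shadowGraph [Nonempty α] :
    LocallyConstructible (shadowGraph H height) := by
  intro A hA
  have pairs_finite : (some ⁻¹' A).Finite := hA.preimage (Option.some_injective _).injOn
  let X : Set B := Prod.fst '' (some ⁻¹' A)
  have X_finite : X.Finite := pairs_finite.image _
  obtain ⟨N, hN⟩ := (X_finite.image height).bddAbove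
  let L : Set (WithTop α) := insert ↑N (Prod.snd '' (some ⁻¹' A))
  have L_finite : L.Finite := (pairs_finite.image _).insert _
  refine ⟨insert none (some '' (X ×ˢ L)), ?_, ((X_finite.prod L_finite).image _).insert _,
    constructible_induce_shadowGraph (Set.forall_mem_image.mp hN) (Set.mem_insert _ _)⟩
  rintro (_ | p) hp
  · exact Set.mem_insert _ _
  · exact Or.inr ⟨p, ⟨⟨p, hp, rfl⟩, Or.inr ⟨p, hp, rfl⟩⟩, rfl⟩

end Shadow

section HubsAndRay

/-- Reflexive adjacency of the base graph: a ray `inr 0, inr 1, …` and three hubs `inl j`, where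
`inl j` is joined to `inr t` when `t ≡ j (mod 3)`. -/
def HubRayRel : Fin 3 ⊕ ℕ → Fin 3 ⊕ ℕ → Prop
  | .inl i, .inl j => i = j
  | .inl i, .inr t => t % 3 = i
  | .inr t, .inl i => t % 3 = i
  | .inr s, .inr t => s ≤ t + 1 ∧ t ≤ s + 1

/-- The ray with three hubs on which the robber plays. -/
def hubRay : SimpleGraph (Fin 3 ⊕ ℕ) :=
  SimpleGraph.fromRel HubRayRel

lemma hubRayRel_refl : ∀ b, HubRayRel b b
  | .inl _ => rfl
  | .inr t => ⟨t.le_succ, t.le_succ⟩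

lemma HubRayRel.symm : ∀ ⦃b b'⦄, HubRayRel b b' → HubRayRel b' b
  | .inl _, .inl _, h => Eq.symm h
  | .inl _, .inr _, h => h
  | .inr _, .inl _, h => h
  | .inr _, .inr _, h => And.symm h

lemma adjOrEq_hubRay {b b' : Fin 3 ⊕ ℕ} : AdjOrEq hubRay b b' ↔ HubRayRel b b' :=
  adjOrEq_fromRel hubRayRel_refl HubRayRel.symm

/-- The residue class modulo `3` of a vertex of the ray, or the class that a hub serves. -/
def rayResidue : Fin 3 ⊕ ℕ → ℕ :=
  Sum.elim Fin.val (· % 3)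

/-- The height function for which the shadow graph of `hubRay` is formed: the position on the ray,
and `0` at the hubs. -/
def rayHeight : Fin 3 ⊕ ℕ → ℕ :=
  Sum.elim 0 id

lemma HubRayRel.rayResidue_eq {b : Fin 3 ⊕ ℕ} {j : Fin 3} (h : HubRayRel b (.inl j)) :
    rayResidue b = j := by
  rcases b with i | s
  · exact congrArg Fin.val h
  · exact h

lemma HubRayRel.eq_hub_or_rayHeight_le {b b' : Fin 3 ⊕ ℕ} (h : HubRayRel b b')
    (hres : rayResidue b' = rayResidue b) : (∃ j, b = .inl j) ∨ rayHeight b' ≤ rayHeight b := by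
  rcases b with i | s
  · exact Or.inl ⟨i, rfl⟩
  · rcases b' with i' | s' <;> simp only [HubRayRel, rayResidue, rayHeight, Sum.elim_inl,
      Sum.elim_inr, Pi.zero_apply, id] at h hres ⊢ <;> omega

lemma HubRayRel.rayHeight_lt_of_rayResidue_eq_succ {b b' : Fin 3 ⊕ ℕ} {t : ℕ} (h : HubRayRel b b')
    (hres : rayResidue b = (t + 1) % 3) (hlt : rayHeight b < t + 1)
    (hres' : rayResidue b' = t % 3) : rayHeight b' < t := by
  rcases b with i | s <;> rcases b' with i' | s' <;> simp only [HubRayRel, rayResidue, rayHeight,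
    Sum.elim_inl, Sum.elim_inr, Pi.zero_apply, id] at h hres hres' hlt ⊢ <;> omega

end HubsAndRay

section Robber

/-- Vertices of the shadow graph of `hubRay`. -/
abbrev RobberVertex : Type :=
  ShadowVertex (Fin 3 ⊕ ℕ) ℕ

/-- The shadow graph of the ray with three hubs, in which the robber evades the cop. -/
abbrev robberGraph : SimpleGraph RobberVertex :=
  shadowGraph hubRay rayHeight

/-- The `j`-th hub as a vertex of the shadow graph. -/
abbrev hubVertex (j : Fin 3) : RobberVertex :=
  some (.inl j, ⊤)

/-- The vertex `t` of the ray as a vertex of the shadow graph. -/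
abbrev rayVertex (t : ℕ) : RobberVertex :=
  some (.inr t, ⊤)

/-- The positions, with the robber to move, that the robber maintains: on the ray, a cop over the
residue class of the robber must be over a lower vertex. -/
inductive RobberSafe : RobberVertex → RobberVertex → Prop
  | at_hub {c : RobberVertex} {j : Fin 3} (h : c ≠ hubVertex j) : RobberSafe c (hubVertex j)
  | on_ray {c : RobberVertex} {t : ℕ}
      (h : ∀ b ℓ, c = some (b, ℓ) → rayResidue b = t % 3 → rayHeight b < t) :
      RobberSafe c (rayVertex t)

/-- An upper bound on the number of further moves before the robber is at a hub. -/
def robberRank : RobberVertex → ℕ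
  | some (.inr t, _) => t + 1
  | _ => 0

lemma RobberSafe.ne {c r : RobberVertex} (h : RobberSafe c r) : c ≠ r := by
  cases h with
  | at_hub h => exact h
  | on_ray h =>
    rintro rfl
    exact lt_irrefl _ (h _ _ rfl rfl)

lemma staysSafe_hub {c : RobberVertex} {j : Fin 3} (h : ¬ AdjOrEq robberGraph c (hubVertex j)) :
    StaysSafe robberGraph RobberSafe c (hubVertex j) :=
  fun _ hc' => .at_hub fun hc'_eq => h (hc'_eq ▸ hc')

lemma exists_over_of_adjOrEq_hub {c : RobberVertex} {j : Fin 3}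
    (h : AdjOrEq robberGraph c (hubVertex j)) :
    ∃ b ℓ, c = some (b, ℓ) ∧ rayResidue b = j := by
  rw [adjOrEq_shadowGraph] at h
  rcases c with _ | ⟨b, ℓ⟩
  · exact absurd rfl h
  · exact ⟨b, ℓ, rfl, (adjOrEq_hubRay.mp h.1).rayResidue_eq⟩

lemma staysSafe_ray {b : Fin 3 ⊕ ℕ} {ℓ : WithTop ℕ} {t : ℕ}
    (h : ∀ b' ℓ', ShadowRel hubRay rayHeight (some (b, ℓ)) (some (b', ℓ')) →
      rayResidue b' = t % 3 → rayHeight b' < t) :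
    StaysSafe robberGraph RobberSafe (some (b, ℓ)) (rayVertex t) := by
  refine fun c' hc' => .on_ray ?_
  rintro b' ℓ' rfl
  exact h b' ℓ' (adjOrEq_shadowGraph.mp hc')

lemma exists_staysSafe (c : RobberVertex) : ∃ r, StaysSafe robberGraph RobberSafe c r := by
  by_contra! h
  have threatens (j : Fin 3) : AdjOrEq robberGraph c (hubVertex j) :=
    not_not.mp fun hj => h _ (staysSafe_hub hj)
  obtain ⟨b, ℓ, rfl, hb0⟩ := exists_over_of_adjOrEq_hub (threatens 0)
  obtain ⟨_, _, ⟨⟩, hb1⟩ := exists_over_of_adjOrEq_hub (threatens 1)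
  simp [hb0] at hb1

lemma exists_rayHeight_bound_of_ne_hub {b : Fin 3 ⊕ ℕ} {ℓ : WithTop ℕ}
    (hne : ∀ j, some (b, ℓ) ≠ hubVertex j) :
    ∃ n, ∀ b' ℓ', ShadowRel hubRay rayHeight (some (b, ℓ)) (some (b', ℓ')) →
      rayResidue b' = rayResidue b → rayHeight b' ≤ n := by
  induction ℓ with
  | top =>
    refine ⟨rayHeight b, fun b' ℓ' hrel hres => ?_⟩
    refine ((adjOrEq_hubRay.mp hrel.1).eq_hub_or_rayHeight_le hres).resolve_left ?_
    rintro ⟨j, rfl⟩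
    exact hne j rfl
  | coe m => exact ⟨m ⊔ rayHeight b, fun _ _ hrel _ => hrel.height_le⟩

lemma exists_staysSafe_ray_of_threatened_hub {c : RobberVertex} {j : Fin 3}
    (hne : c ≠ hubVertex j) (h : AdjOrEq robberGraph c (hubVertex j)) :
    ∃ t : ℕ, t % 3 = j ∧ StaysSafe robberGraph RobberSafe c (rayVertex t) := by
  obtain ⟨b, ℓ, rfl, hres⟩ := exists_over_of_adjOrEq_hub h
  have ne_hub (i : Fin 3) : some (b, ℓ) ≠ hubVertex i := by
    rintro ⟨⟩
    exact hne (congrArg hubVertex (Fin.ext hres))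
  obtain ⟨n, hn⟩ := exists_rayHeight_bound_of_ne_hub ne_hub
  refine ⟨3 * (n + 1) + j, by omega, staysSafe_ray fun b' ℓ' hrel hres' => ?_⟩
  have := hn b' ℓ' hrel (by omega)
  omega

lemma exists_reply_of_on_ray {c : RobberVertex} {t : ℕ}
    (h : ∀ b ℓ, c = some (b, ℓ) → rayResidue b = t % 3 → rayHeight b < t) :
    ∃ r', AdjOrEq robberGraph (rayVertex t) r' ∧ StaysSafe robberGraph RobberSafe c r' ∧
      robberRank r' < robberRank (rayVertex t) := by
  let j : Fin 3 := ⟨t % 3, Nat.mod_lt t three_pos⟩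
  by_cases hthreat : AdjOrEq robberGraph c (hubVertex j)
  · obtain ⟨b, ℓ, rfl, hres⟩ := exists_over_of_adjOrEq_hub hthreat
    have hlt := h b ℓ rfl hres
    obtain ⟨s, rfl⟩ := Nat.exists_eq_succ_of_ne_zero (Nat.ne_zero_of_lt hlt)
    refine ⟨rayVertex s, ?_, ?_, Nat.lt_succ_self _⟩
    · exact AdjOrEq.shadowGraph_top (adjOrEq_hubRay.mpr ⟨by omega, by omega⟩)
    · exact staysSafe_ray fun b' _ hrel =>
        (adjOrEq_hubRay.mp hrel.1).rayHeight_lt_of_rayResidue_eq_succ hres hlt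
  · exact ⟨hubVertex j, AdjOrEq.shadowGraph_top (adjOrEq_hubRay.mpr rfl),
      staysSafe_hub hthreat, Nat.succ_pos t⟩

lemma RobberSafe.exists_reply {c r : RobberVertex} (h : RobberSafe c r) :
    ∃ r', AdjOrEq robberGraph r r' ∧ StaysSafe robberGraph RobberSafe c r' ∧
      (r ∈ Set.range hubVertex ∨ robberRank r' < robberRank r) := by
  cases h with
  | @at_hub j hne =>
    by_cases hthreat : AdjOrEq robberGraph c (hubVertex j)
    · obtain ⟨t, ht, hsafe⟩ := exists_staysSafe_ray_of_threatened_hub hne hthreat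
      exact ⟨rayVertex t, AdjOrEq.shadowGraph_top (adjOrEq_hubRay.mpr ht), hsafe,
        Or.inl ⟨j, rfl⟩⟩
    · exact ⟨hubVertex j, AdjOrEq.refl _ _, staysSafe_hub hthreat, Or.inl ⟨j, rfl⟩⟩
  | on_ray h =>
    obtain ⟨r', hadj, hsafe, hrank⟩ := exists_reply_of_on_ray h
    exact ⟨r', hadj, hsafe, Or.inr hrank⟩

theorem not_weakCopWin_robberGraph : ¬ WeakCopWin robberGraph :=
  not_weakCopWin_of_safe (Set.finite_range hubVertex) robberRank (fun _ _ => RobberSafe.ne)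
    exists_staysSafe fun _ _ => RobberSafe.exists_reply

end Robber

theorem exists_locallyConstructible_not_weakCopWin :
    ∃ (V : Type) (G : SimpleGraph V),
      Countable V ∧ G.Connected ∧ LocallyConstructible G ∧ ¬ WeakCopWin G :=
  ⟨RobberVertex, robberGraph, inferInstance, connected_shadowGraph,
    locallyConstructible_shadowGraph, not_weakCopWin_robberGraph⟩
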